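/- For every natural number m and elements x, y of a commutative ring, (x+y)^{s(m)} = \sum_{k=0}^{m, s(k)+s(m-k)=s(m)} x^{s(k)} y^{s(m-k)}, where the sum ranges over all natural numbers k with 0 \le k \le m such that s(k) + s(m-k) = s(m). -/

import Mathlib

/-- `s k` is the sum of the binary digits of `k`. -/
def s (k : ℕ) : ℕ := (Nat.digits 2 k).sum

/-!
Identify `k` with the set `Finset.equivBitIndices k` of positions of its binary ones, so that
`s k` is the size of this set. Then `k ≤ m` and `s k + s (m - k) = s m` hold exactly when the set
of `k` is a subset of that of `m`: disjoint sets add without carrying, while a shared bit merges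
two equal powers of two into one, losing digit sum that cannot be regained because `s` is
subadditive (Legendre's formula gives `s a + s b - s (a + b)` as the 2-adic valuation of a
binomial coefficient). The sum thus runs over the subsets of a set with `s m` elements, and is
given by the binomial theorem.
-/

open Finset
open scoped Nat

lemma s_two_mul (n : ℕ) : s (2 * n) = s n := by
  rcases eq_or_ne n 0 with rfl | hn
  · rw [mul_zero]
  · simpa [s] using congrArg List.sum
      (Nat.digits_add 2 one_lt_two 0 n two_pos (Or.inr hn))

lemma s_two_mul_add_one (n : ℕ) : s (2 * n + 1) = s n + 1 := by
  simpa [s, add_comm] using congrArg List.sum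
    (Nat.digits_add 2 one_lt_two 1 n one_lt_two (Or.inl one_ne_zero))

lemma length_bitIndices (n : ℕ) : n.bitIndices.length = s n := by
  induction n using Nat.evenOddRec with
  | h0 => simp [s]
  | h_even n ih => simpa [s_two_mul] using ih
  | h_odd n ih => simpa [s_two_mul_add_one] using ih

lemma card_equivBitIndices (n : ℕ) : #(equivBitIndices n) = s n :=
  (List.toFinset_card_of_nodup Nat.bitIndices_nodup).trans (length_bitIndices n)

lemma s_sum_two_pow (t : Finset ℕ) : s (∑ i ∈ t, 2 ^ i) = #t := by
  rw [← card_equivBitIndices, ← equivBitIndices_symm_apply, Equiv.apply_symm_apply]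

lemma s_two_pow (i : ℕ) : s (2 ^ i) = 1 := by
  simpa using s_sum_two_pow {i}

lemma equivBitIndices_add_of_disjoint {a b : ℕ}
    (h : Disjoint (equivBitIndices a) (equivBitIndices b)) :
    equivBitIndices (a + b) = equivBitIndices a ∪ equivBitIndices b := by
  rw [← equivBitIndices.eq_symm_apply, equivBitIndices_symm_apply, sum_union h]
  simp

lemma exists_eq_add_two_pow {a i : ℕ} (hi : i ∈ equivBitIndices a) :
    ∃ c, a = c + 2 ^ i ∧ s a = s c + 1 := by
  refine ⟨∑ j ∈ (equivBitIndices a).erase i, 2 ^ j, ?_, ?_⟩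
  · rw [sum_erase_add _ _ hi, equivBitIndices_apply, sum_toFinset_bitIndices_two_pow]
  · rw [s_sum_two_pow, card_erase_add_one hi, card_equivBitIndices]

lemma s_add_padicValNat_factorial (n : ℕ) : s n + padicValNat 2 n ! = n := by
  have legendre : (2 - 1) * padicValNat 2 n ! = n - s n := sub_one_mul_padicValNat_factorial n
  have hle : s n ≤ n := Nat.digit_sum_le 2 n
  omega

lemma s_add_s_eq_s_add_add_padicValNat_choose (a b : ℕ) :
    s a + s b = s (a + b) + padicValNat 2 ((a + b).choose b) := by
  have choose_ne_zero : (a + b).choose b ≠ 0 := (Nat.choose_pos (Nat.le_add_left b a)).ne'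
  have hval : padicValNat 2 ((a + b).choose b) + padicValNat 2 a ! + padicValNat 2 b ! =
      padicValNat 2 (a + b)! := by
    rw [← Nat.add_choose_mul_factorial_mul_factorial a b,
      padicValNat.mul (mul_ne_zero choose_ne_zero a.factorial_ne_zero) b.factorial_ne_zero,
      padicValNat.mul choose_ne_zero a.factorial_ne_zero]
  have ha := s_add_padicValNat_factorial a
  have hb := s_add_padicValNat_factorial b
  have hab := s_add_padicValNat_factorial (a + b)
  omega

lemma s_add_le (a b : ℕ) : s (a + b) ≤ s a + s b :=
  (Nat.le_add_right _ _).trans_eq (s_add_s_eq_s_add_add_padicValNat_choose a b).symm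

lemma s_add_lt_of_mem {a b i : ℕ} (ha : i ∈ equivBitIndices a) (hb : i ∈ equivBitIndices b) :
    s (a + b) < s a + s b := by
  obtain ⟨c, rfl, hc⟩ := exists_eq_add_two_pow ha
  obtain ⟨d, rfl, hd⟩ := exists_eq_add_two_pow hb
  calc s (c + 2 ^ i + (d + 2 ^ i))
      = s (c + d + 2 ^ (i + 1)) := by congr 1; ring
    _ ≤ s c + s d + s (2 ^ (i + 1)) :=
        (s_add_le _ _).trans (Nat.add_le_add_right (s_add_le c d) _)
    _ < s (c + 2 ^ i) + s (d + 2 ^ i) := by rw [s_two_pow]; omega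

lemma s_add_s_eq_s_add_iff_disjoint {a b : ℕ} :
    s a + s b = s (a + b) ↔ Disjoint (equivBitIndices a) (equivBitIndices b) := by
  refine ⟨fun h => disjoint_left.2 fun i ha hb => (s_add_lt_of_mem ha hb).ne' h, fun h => ?_⟩
  simp only [← card_equivBitIndices, equivBitIndices_add_of_disjoint h, card_union_of_disjoint h]

lemma le_and_s_add_s_sub_eq_s_iff_subset {k m : ℕ} :
    k ≤ m ∧ s k + s (m - k) = s m ↔ equivBitIndices k ⊆ equivBitIndices m := by
  constructor
  · rintro ⟨hkm, hs⟩
    obtain ⟨l, rfl⟩ := Nat.exists_eq_add_of_le hkm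
    rw [Nat.add_sub_cancel_left, s_add_s_eq_s_add_iff_disjoint] at hs
    rw [equivBitIndices_add_of_disjoint hs]
    exact subset_union_left
  · intro hsub
    obtain ⟨l, hl⟩ := equivBitIndices.surjective (equivBitIndices m \ equivBitIndices k)
    have hdisj : Disjoint (equivBitIndices k) (equivBitIndices l) := hl ▸ disjoint_sdiff
    have hadd : k + l = m := equivBitIndices.injective <| by
      rw [equivBitIndices_add_of_disjoint hdisj, hl, union_sdiff_of_subset hsub]
    refine ⟨hadd ▸ Nat.le_add_right k l, ?_⟩
    rw [← hadd, Nat.add_sub_cancel_left, s_add_s_eq_s_add_iff_disjoint]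
    exact hdisj

lemma sum_powerset_pow_mul_pow_of_commute {ι R : Type*} [Semiring R] {x y : R}
    (hxy : Commute x y) (t : Finset ι) :
    ∑ u ∈ t.powerset, x ^ #u * y ^ (#t - #u) = (x + y) ^ #t := by
  rw [sum_powerset_apply_card (fun n => x ^ n * y ^ (#t - n)), hxy.add_pow]
  simp only [nsmul_eq_mul']

theorem digital_binomial_digit_additive_general {R : Type*} [Semiring R] (m : ℕ) {x y : R}
    (hxy : Commute x y) :
    (x + y) ^ s m =
      ∑ k ∈ (Finset.range (m + 1)).filter (fun k => s k + s (m - k) = s m),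
        x ^ s k * y ^ s (m - k) := by
  rw [← card_equivBitIndices m, ← sum_powerset_pow_mul_pow_of_commute hxy, eq_comm]
  refine sum_equiv equivBitIndices (fun k => ?_) (fun k hk => ?_)
  · rw [mem_filter, mem_range_succ_iff, mem_powerset, card_equivBitIndices,
      le_and_s_add_s_sub_eq_s_iff_subset]
  · have hs : s k + s (m - k) = #(equivBitIndices m) := (mem_filter.1 hk).2
    rw [card_equivBitIndices k, ← hs, Nat.add_sub_cancel_left]

/-- **Digital Binomial Theorem** (sum-of-digits additivity form): for a natural
number `m` and elements `x, y` of a commutative ring,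
`(x+y)^{s(m)} = ∑ x^{s(k)} y^{s(m-k)}`, the sum over `0 ≤ k ≤ m` with
`s(k) + s(m-k) = s(m)`. -/
theorem digital_binomial_digit_additive {R : Type*} [CommRing R] (m : ℕ) (x y : R) :
    (x + y) ^ s m =
      ∑ k ∈ (Finset.range (m + 1)).filter (fun k => s k + s (m - k) = s m),
        x ^ s k * y ^ s (m - k) :=
  digital_binomial_digit_additive_general m (Commute.all x y)
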